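/- Let 𝐀, 𝐗, 𝐘 be nonempty forests of finite rooted trees. Then 𝐀·𝐗 = 𝐀·𝐘 if and only if 𝐗|_{depth(𝐀)} = 𝐘|_{depth(𝐀)}. -/

import Mathlib

noncomputable section

/-- A rooted tree (finite or infinite), presented by its levels: `level n` is the
set of vertices of depth `n` (finitely many at each depth), every vertex of depth
`n+1` has a parent of depth `n` (edges are directed towards the root), and there
is a unique vertex of depth `0`, the root. -/
structure RTree : Type 1 where
  level : ℕ → Type
  parent : ∀ n, level (n + 1) → level n
  fin : ∀ n, Fintype (level n)
  root : level 0
  root_unique : ∀ x : level 0, x = root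

namespace RTree

/-- Isomorphism of rooted trees: a depth-preserving bijection of the vertices
commuting with the parent maps (hence root- and edge-preserving). -/
def Iso (t s : RTree) : Prop :=
  ∃ e : ∀ n, t.level n ≃ s.level n,
    ∀ (n : ℕ) (x : t.level (n + 1)), e n (t.parent n x) = s.parent n (e (n + 1) x)

/-- The (layer-by-layer direct) product of two rooted trees. -/
def tprod (t s : RTree) : RTree where
  level n := t.level n × s.level n
  parent n x := (t.parent n x.1, s.parent n x.2)
  fin n := by haveI := t.fin n; haveI := s.fin n; infer_instance
  root := (t.root, s.root)
  root_unique x := by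
    obtain ⟨a, b⟩ := x
    rw [t.root_unique a, s.root_unique b]

/-- The cut of a tree at depth `n`: the subtree induced on vertices of depth `≤ n`. -/
def tcut (t : RTree) (n : ℕ) : RTree where
  level k := PLift (k ≤ n) × t.level k
  parent k x := (⟨Nat.le_of_succ_le x.1.down⟩, t.parent k x.2)
  fin k := by
    haveI := t.fin k
    haveI : Finite (PLift (k ≤ n)) := Finite.of_subsingleton
    exact Fintype.ofFinite _
  root := (⟨Nat.zero_le n⟩, t.root)
  root_unique x := by
    obtain ⟨a, b⟩ := x
    rw [t.root_unique b]

/-- A tree is finite when it has no vertices below some depth. -/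
def IsFinite (t : RTree) : Prop := ∃ N, ∀ k, N ≤ k → IsEmpty (t.level k)

/-- The depth of a (finite) tree: the largest depth of one of its vertices. -/
def depth (t : RTree) : ℕ := sSup {n | Nonempty (t.level n)}

/-- `tpow t k` is the `k`-fold product `t^k` of the tree `t` with itself (for `k ≥ 1`). -/
def tpow (t : RTree) : ℕ → RTree
  | 0 => t
  | 1 => t
  | n + 2 => tprod t (tpow t (n + 1))

/-- Iterated parent map, sending a vertex of depth `k+1` to its ancestor of depth 1. -/
def down (t : RTree) : ∀ k, t.level (k + 1) → t.level 1
  | 0, x => x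
  | k + 1, x => t.down k (t.parent (k + 1) x)

/-- The subtree of `t` rooted at the depth-1 vertex `v` (a child of the root). -/
def subtreeAt (t : RTree) (v : t.level 1) : RTree where
  level k := { x : t.level (k + 1) // t.down k x = v }
  parent k x := ⟨t.parent (k + 1) x.1, x.2⟩
  fin k := by haveI := t.fin (k + 1); exact Fintype.ofFinite _
  root := ⟨v, rfl⟩
  root_unique x := Subtype.ext x.2

/-- `D t`: the forest (here, a list) of the subtrees of `t` rooted at the
children of the root. -/
def D (t : RTree) : List RTree := (@Finset.univ _ (t.fin 1)).toList.map t.subtreeAt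

end RTree

/-- A forest is a finite multiset of rooted trees; we represent it by a list of
(concrete) trees, equality of forests being `ForestEq` below. -/
abbrev Forest := List RTree

/-- Equality of forests as multisets of isomorphism classes of rooted trees. -/
def ForestEq (F G : Forest) : Prop := Multiset.Rel RTree.Iso (↑F) (↑G)

/-- `F` is a sub-multiset of `G` up to isomorphism of rooted trees. -/
def ForestLe (F G : Forest) : Prop :=
  ∃ H : Multiset RTree, H ≤ (↑G : Multiset RTree) ∧ Multiset.Rel RTree.Iso (↑F) H

/-- The product of two forests: the multiset of pairwise products. -/
def fprod (F G : Forest) : Forest := (F.map fun t => G.map fun s => t.tprod s).flatten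

/-- The cut of a forest at depth `n`. -/
def fcut (F : Forest) (n : ℕ) : Forest := F.map (RTree.tcut · n)

/-- The depth of a forest: maximum of the depths of its trees. -/
def fdepth (F : Forest) : ℕ := (F.map RTree.depth).foldr max 0

/-- `fpow F k` is the `k`-fold product `F^k` of the forest `F` with itself (for `k ≥ 1`). -/
def fpow (F : Forest) : ℕ → Forest
  | 0 => F
  | 1 => F
  | n + 2 => fprod F (fpow F (n + 1))

/-- `D` of a forest: the multiset union of the `D` of its trees. -/
def fD (F : Forest) : Forest := (F.map RTree.D).flatten

/-- `R F`: the rooted tree obtained by attaching each tree of the forest `F`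
as a child subtree of a new common root, so that `D (R F) = F`. -/
def rollRoot (F : Forest) : RTree where
  level k :=
    match k with
    | 0 => PUnit
    | k + 1 => Σ i : Fin F.length, (F.get i).level k
  parent k :=
    match k with
    | 0 => fun _ => PUnit.unit
    | k + 1 => fun x => ⟨x.1, (F.get x.1).parent k x.2⟩
  fin k := by
    match k with
    | 0 => exact inferInstanceAs (Fintype PUnit)
    | k + 1 =>
      haveI : ∀ i : Fin F.length, Fintype ((F.get i).level k) := fun i => (F.get i).fin k
      exact inferInstanceAs (Fintype (Σ i : Fin F.length, (F.get i).level k))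
  root := PUnit.unit
  root_unique _ := rfl

/-- The number of vertices of depth `d` in a forest. -/
def levelCard (F : Forest) (d : ℕ) : ℕ := (F.map fun t => @Fintype.card _ (t.fin d)).sum

/-- The total number of vertices of a (finite) forest. -/
def totalCard (F : Forest) : ℕ := ∑ d ∈ Finset.range (fdepth F + 1), levelCard F d

/-- A finite discrete-time dynamical system: a finite set of states together
with a transition function. -/
structure FDDS : Type 1 where
  S : Type
  fin : Fintype S
  f : S → S

namespace FDDS

/-- A state is periodic when some positive iterate of the transition function fixes it. -/
def Periodic (A : FDDS) (u : A.S) : Prop := ∃ p, 1 ≤ p ∧ A.f^[p] u = u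

/-- The least `k` such that `f^[k] s` is periodic. -/
def depthOf (A : FDDS) (s : A.S) : ℕ := sInf {k | A.Periodic (A.f^[k] s)}

/-- The depth of an FDDS: the maximum over states `s` of the least `k` such
that `f^[k] s` is periodic. -/
def depth (A : FDDS) : ℕ := sSup {d | ∃ s : A.S, d = A.depthOf s}

/-- The functional digraph of `A` has a single (weakly) connected component. -/
def Connected (A : FDDS) : Prop := ∀ s s' : A.S, ∃ k l, A.f^[k] s = A.f^[l] s'

/-- The unroll tree of `A` in the state `u`: vertices of depth `k` are the
`k`-th preimages of `u`, the parent of `(v,k+1)` being `(f v, k)`. -/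
def unrollTree (A : FDDS) (u : A.S) : RTree where
  level k := { s : A.S // A.f^[k] s = u }
  parent k x := ⟨A.f x.1, by rw [← Function.iterate_succ_apply]; exact x.2⟩
  fin k := by haveI := A.fin; exact Fintype.ofFinite _
  root := ⟨u, rfl⟩
  root_unique x := Subtype.ext x.2

/-- The unroll of `A`: the multiset of the unroll trees of `A` in its periodic states. -/
def unroll (A : FDDS) : Forest :=
  haveI := A.fin
  letI : DecidablePred A.Periodic := Classical.decPred _
  (Finset.univ.filter A.Periodic).toList.map A.unrollTree

/-- The minimal period of a periodic state. -/
def minPeriod (A : FDDS) (u : A.S) : ℕ := sInf {p | 1 ≤ p ∧ A.f^[p] u = u}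

/-- The periodic state `w` with `f^[i] w = u`: the `i`-th "shift" of `u`
backwards along its cycle. -/
def shiftState (A : FDDS) (u : A.S) (i : ℕ) : A.S := A.f^[i * (A.minPeriod u - 1)] u

/-- The shift `σ^i(t)` of the unroll tree `t = unrollTree A u`: the unroll tree
rooted at the depth-`i` vertex of the infinite branch of `t`. -/
def shiftTree (A : FDDS) (u : A.S) (i : ℕ) : RTree := A.unrollTree (A.shiftState u i)

/-- The unroll tree of `A` in `u` admits a periodic pattern of size `p ≥ 1`,
i.e. `σ^p(t_u) = t_u`. -/
def PatternSize (A : FDDS) (u : A.S) (p : ℕ) : Prop :=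
  1 ≤ p ∧ RTree.Iso (A.shiftTree u p) (A.unrollTree u)

/-- `|Shift(t_u)|`: the smallest size of a periodic pattern of the unroll tree of `A` in `u`. -/
def shiftCount (A : FDDS) (u : A.S) : ℕ := sInf {p | A.PatternSize u p}

end FDDS

/-- A rooted tree is an unroll tree when it is isomorphic to the unroll tree of
some FDDS in one of its periodic states. -/
def IsUnrollTree (x : RTree) : Prop :=
  ∃ (A : FDDS) (u : A.S), A.Periodic u ∧ RTree.Iso x (A.unrollTree u)

end

/-!
Fix `d` and count the homomorphisms from test trees `T` of depth at most `d`. These counts turn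
products of trees into products of numbers, so `A · X = A · Y` gives
`hom(T, A) hom(T, X) = hom(T, A) hom(T, Y)`, and `hom(T, A)` is nonzero as soon as `A` has a vertex
of depth `d`. It remains to recover `X|_d` from the numbers `hom(T, X)`. Gluing test trees at their
roots makes them a monoid of which `hom(-, x)` is a character, for each tree `x`. By Dedekind's
independence of characters, the sums over a forest determine the multiset of its characters. The
same argument, applied to the children of the root, shows by induction on `d` that the character of
`x` determines `x|_d`.
-/

section Multiset

theorem multisetRel_bind_of_forall_mem {α β γ : Type*} {r : β → γ → Prop} {s : Multiset α}
    {f : α → Multiset β} {g : α → Multiset γ} (h : ∀ a ∈ s, Multiset.Rel r (f a) (g a)) :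
    Multiset.Rel r (s.bind f) (s.bind g) := by
  induction s using Multiset.induction_on with
  | empty => simpa only [Multiset.zero_bind] using Multiset.Rel.zero
  | cons a s ih =>
    simp only [Multiset.cons_bind]
    exact (h a (Multiset.mem_cons_self a s)).add
      (ih fun b hb => h b (Multiset.mem_cons_of_mem hb))

theorem exists_equiv_comp_eq_of_map_univ_eq {α β γ : Type*} [Fintype α] [Fintype β]
    {f : α → γ} {g : β → γ}
    (h : (Finset.univ : Finset α).val.map f = (Finset.univ : Finset β).val.map g) :
    ∃ e : α ≃ β, g ∘ e = f := by
  classical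
  have card_fiber_eq (c : γ) : Fintype.card {a // f a = c} = Fintype.card {b // g b = c} := by
    have := congrArg (Multiset.count c) h
    simpa only [Multiset.count_map, Fintype.card_subtype, Finset.card_def, Finset.filter_val,
      eq_comm] using this
  let e := Equiv.ofFiberEquiv fun c => Fintype.equivOfCardEq (card_fiber_eq c)
  exact ⟨e, funext fun a => Equiv.ofFiberEquiv_map _ a⟩

end Multiset

section Characters

variable {G : Type*} [MulOneClass G]

theorem linearIndependent_monoidHom_nat :
    LinearIndependent ℕ fun χ : G →* ℕ => (χ : G → ℕ) := by
  let castComp (χ : G →* ℕ) : G →* ℤ := (Nat.castRingHom ℤ : ℕ →* ℤ).comp χ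
  have castComp_injective : Function.Injective castComp := fun χ ψ h =>
    MonoidHom.ext fun g => Nat.cast_injective (DFunLike.congr_fun h g)
  have indep_int : LinearIndependent ℕ fun χ : G →* ℤ => (χ : G → ℤ) :=
    (linearIndependent_monoidHom G ℤ).restrict_scalars' ℕ
  exact (indep_int.comp castComp castComp_injective).of_comp
    ((Nat.castAddMonoidHom ℤ).toNatLinearMap.compLeft G)

theorem multiset_eq_of_forall_sum_monoidHom_eq {S T : Multiset (G →* ℕ)}
    (h : ∀ g, (S.map (· g)).sum = (T.map (· g)).sum) : S = T := by
  classical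
  have linearCombination_apply (U : Multiset (G →* ℕ)) (g : G) :
      Finsupp.linearCombination ℕ (fun χ : G →* ℕ => (χ : G → ℕ)) U.toFinsupp g =
        (U.map (· g)).sum := by
    simp [Finsupp.linearCombination_apply, Finsupp.sum, Finset.sum_multiset_map_count]
  apply Multiset.toFinsupp.injective
  apply linearIndependent_monoidHom_nat
  funext g
  rw [linearCombination_apply, linearCombination_apply, h]

end Characters

namespace RTree

instance (t : RTree) (n : ℕ) : Fintype (t.level n) := t.fin n

theorem Iso.refl (t : RTree) : Iso t t :=
  ⟨fun _ => Equiv.refl _, fun _ _ => rfl⟩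

theorem Iso.symm {t s : RTree} : Iso t s → Iso s t := by
  rintro ⟨e, he⟩
  exact ⟨fun n => (e n).symm, fun n y => by simp [Equiv.symm_apply_eq, he]⟩

theorem Iso.trans {t s u : RTree} : Iso t s → Iso s u → Iso t u := by
  rintro ⟨e, he⟩ ⟨f, hf⟩
  exact ⟨fun n => (e n).trans (f n), fun n x => by simp [he, hf]⟩

theorem Iso.tprod {t t' s s' : RTree} :
    Iso t t' → Iso s s' → Iso (t.tprod s) (t'.tprod s') := by
  rintro ⟨e, he⟩ ⟨f, hf⟩
  exact ⟨fun n => (e n).prodCongr (f n), fun n x => Prod.ext (he n x.1) (hf n x.2)⟩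

theorem iso_tprod_tcut {t : RTree} {d : ℕ} (h : d ∈ upperBounds {n | Nonempty (t.level n)})
    (s : RTree) : Iso (t.tprod s) (t.tprod (s.tcut d)) :=
  ⟨fun _ => ⟨fun p => (p.1, ⟨h ⟨p.1⟩⟩, p.2), fun p => (p.1, p.2.2), fun _ => rfl, fun _ => rfl⟩,
    fun _ _ => rfl⟩

theorem down_equiv {t s : RTree} {e : ∀ n, t.level n ≃ s.level n}
    (he : ∀ n x, e n (t.parent n x) = s.parent n (e (n + 1) x)) (k : ℕ) (x : t.level (k + 1)) :
    s.down k (e (k + 1) x) = e 1 (t.down k x) := by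
  induction k with
  | zero => rfl
  | succ k ih => simp only [down, ← he, ih]

theorem down_tprod (t s : RTree) (k : ℕ) (x : (t.tprod s).level (k + 1)) :
    (t.tprod s).down k x = (t.down k x.1, s.down k x.2) := by
  induction k with
  | zero => rfl
  | succ k ih => exact ih _

theorem down_tcut (t : RTree) (d k : ℕ) (x : (t.tcut d).level (k + 1)) :
    ((t.tcut d).down k x).2 = t.down k x.2 := by
  induction k with
  | zero => rfl
  | succ k ih => exact ih _

theorem subtreeAt_iso {t s : RTree} {e : ∀ n, t.level n ≃ s.level n}
    (he : ∀ n x, e n (t.parent n x) = s.parent n (e (n + 1) x)) (v : t.level 1) :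
    Iso (t.subtreeAt v) (s.subtreeAt (e 1 v)) :=
  ⟨fun k => (e (k + 1)).subtypeEquiv fun x => by rw [down_equiv he, (e 1).apply_eq_iff_eq],
    fun k x => Subtype.ext (he (k + 1) x.1)⟩

theorem subtreeAt_tprod_iso (t s : RTree) (v : t.level 1) (w : s.level 1) :
    Iso ((t.tprod s).subtreeAt (v, w)) ((t.subtreeAt v).tprod (s.subtreeAt w)) :=
  ⟨fun k => (Equiv.subtypeEquivRight fun x => by
      rw [down_tprod]; exact Prod.mk_inj).trans
      (Equiv.subtypeProdEquivProd (p := (t.down k · = v)) (q := (s.down k · = w))),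
    fun _ _ => rfl⟩

theorem subtreeAt_tcut_iso (t : RTree) (d : ℕ) (v : (t.tcut (d + 1)).level 1) :
    Iso ((t.tcut (d + 1)).subtreeAt v) ((t.subtreeAt v.2).tcut d) :=
  ⟨fun _ =>
    { toFun := fun x =>
        (⟨Nat.le_of_succ_le_succ x.1.1.down⟩,
          ⟨x.1.2, (down_tcut ..).symm.trans (congrArg Prod.snd x.2)⟩)
      invFun := fun x =>
        ⟨(⟨Nat.succ_le_succ x.1.down⟩, x.2.1),
          Prod.ext (Subsingleton.elim _ _) ((down_tcut ..).trans x.2.2)⟩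
      left_inv := fun _ => rfl
      right_inv := fun _ => rfl },
    fun _ _ => rfl⟩

theorem iso_of_subtreeAt_iso {t s : RTree} (e : t.level 1 ≃ s.level 1)
    (h : ∀ v, Iso (t.subtreeAt v) (s.subtreeAt (e v))) : Iso t s := by
  choose E hE using h
  let rootEquiv : t.level 0 ≃ s.level 0 :=
    ⟨fun _ => s.root, fun _ => t.root, fun x => (t.root_unique x).symm,
      fun y => (s.root_unique y).symm⟩
  let levelEquiv (k : ℕ) : t.level (k + 1) ≃ s.level (k + 1) :=
    (Equiv.sigmaFiberEquiv (t.down k)).symm.trans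
      ((Equiv.sigmaCongr e (E · k)).trans (Equiv.sigmaFiberEquiv (s.down k)))
  refine ⟨fun | 0 => rootEquiv | k + 1 => levelEquiv k, ?_⟩
  rintro (_ | k) x
  · exact (s.root_unique _).symm
  · exact congrArg Subtype.val (hE (t.down (k + 1) x) k ⟨x, rfl⟩)

/-- A branch of a test tree of depth at most `d`: there is none if `d = 0`, and for `d = n + 1`
it is a test tree of depth at most `n`, i.e. a word of branches at stage `n`. -/
def TestBranch : ℕ → Type
  | 0 => Empty
  | d + 1 => FreeMonoid (TestBranch d)

/-- The finite trees of depth at most `d` from which homomorphisms are counted. A tree is encoded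
by the word of the branches at its root, so that multiplying words glues trees at their roots. -/
abbrev TestTree (d : ℕ) : Type := FreeMonoid (TestBranch d)

/-- The number of root-preserving homomorphisms from a test tree of depth at most `d` to the
given tree, as a character of the monoid of test trees. -/
noncomputable def homCount : (d : ℕ) → RTree → (TestTree d →* ℕ)
  | 0, _ => 1
  | d + 1, t => FreeMonoid.lift fun b : TestTree d => ∑ v, homCount d (t.subtreeAt v) b

theorem homCount_succ_of (t : RTree) (d : ℕ) (b : TestBranch (d + 1)) :
    t.homCount (d + 1) (FreeMonoid.of b) = ∑ v, (t.subtreeAt v).homCount d b :=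
  FreeMonoid.lift_eval_of _ _

theorem Iso.homCount_eq {t s : RTree} (h : Iso t s) (d : ℕ) : t.homCount d = s.homCount d := by
  induction d generalizing t s with
  | zero => rfl
  | succ d ih =>
    obtain ⟨e, he⟩ := h
    refine FreeMonoid.hom_eq fun b => ?_
    rw [homCount_succ_of, homCount_succ_of]
    exact Fintype.sum_equiv (e 1) _ _ fun v => by rw [ih (subtreeAt_iso he v)]

theorem homCount_tprod (t s : RTree) (d : ℕ) :
    (t.tprod s).homCount d = t.homCount d * s.homCount d := by
  induction d generalizing t s with
  | zero => rfl
  | succ d ih =>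
    refine FreeMonoid.hom_eq fun b => ?_
    rw [MonoidHom.mul_apply, homCount_succ_of, homCount_succ_of, homCount_succ_of,
      Fintype.sum_mul_sum, ← Fintype.sum_prod_type']
    refine Fintype.sum_equiv (Equiv.refl _) _ _ fun ⟨v, w⟩ => ?_
    rw [(subtreeAt_tprod_iso t s v w).homCount_eq, ih]
    rfl

theorem homCount_pos {t : RTree} {d : ℕ} (h : Nonempty (t.level d)) (b : TestTree d) :
    0 < t.homCount d b := by
  induction d generalizing t with
  | zero => exact Nat.one_pos
  | succ d ih =>
    obtain ⟨x⟩ := h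
    have branch_pos (c : TestTree d) : 0 < ∑ v, (t.subtreeAt v).homCount d c :=
      Finset.sum_pos' (fun _ _ => Nat.zero_le _)
        ⟨t.down d x, Finset.mem_univ _, ih (t := t.subtreeAt _) ⟨⟨x, rfl⟩⟩ c⟩
    induction b using FreeMonoid.inductionOn' with
    | one => simp only [map_one, Nat.one_pos]
    | of_mul c b hb =>
      rw [map_mul, homCount_succ_of]
      exact Nat.mul_pos (branch_pos c) hb

theorem tcut_zero_iso (t s : RTree) : Iso (t.tcut 0) (s.tcut 0) := by
  have isEmpty_level_one (u : RTree) : IsEmpty ((u.tcut 0).level 1) :=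
    ⟨fun x => Nat.not_succ_le_zero 0 x.1.down⟩
  exact iso_of_subtreeAt_iso (Equiv.equivOfIsEmpty _ _) isEmptyElim

theorem exists_children_equiv_of_homCount_eq {t s : RTree} {d : ℕ}
    (h : t.homCount (d + 1) = s.homCount (d + 1)) :
    ∃ e : t.level 1 ≃ s.level 1,
      ∀ v, (t.subtreeAt v).homCount d = (s.subtreeAt (e v)).homCount d := by
  have map_eq : Finset.univ.val.map (fun v => (t.subtreeAt v).homCount d) =
      Finset.univ.val.map (fun w => (s.subtreeAt w).homCount d) := by
    refine multiset_eq_of_forall_sum_monoidHom_eq fun b => ?_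
    rw [Multiset.map_map, Multiset.map_map]
    exact (homCount_succ_of t d b).symm.trans
      ((DFunLike.congr_fun h _).trans (homCount_succ_of s d b))
  obtain ⟨e, he⟩ := exists_equiv_comp_eq_of_map_univ_eq map_eq
  exact ⟨e, fun v => (congrFun he v).symm⟩

theorem tcut_iso_of_homCount_eq {t s : RTree} {d : ℕ} (h : t.homCount d = s.homCount d) :
    Iso (t.tcut d) (s.tcut d) := by
  induction d generalizing t s with
  | zero => exact tcut_zero_iso t s
  | succ d ih =>
    obtain ⟨e, he⟩ := exists_children_equiv_of_homCount_eq h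
    exact iso_of_subtreeAt_iso ((Equiv.refl _).prodCongr e) fun v =>
      (subtreeAt_tcut_iso t d v).trans
        ((ih (he v.2)).trans (subtreeAt_tcut_iso s d (v.1, e v.2)).symm)

theorem IsFinite.isGreatest_depth {t : RTree} (h : t.IsFinite) :
    IsGreatest {n | Nonempty (t.level n)} t.depth := by
  obtain ⟨N, hN⟩ := h
  have bdd : BddAbove {n | Nonempty (t.level n)} :=
    ⟨N, fun n hn => le_of_not_ge fun hNn => not_isEmpty_iff.2 hn (hN n hNn)⟩
  exact ⟨Nat.sSup_mem ⟨0, ⟨t.root⟩⟩ bdd, fun _ hn => le_csSup bdd hn⟩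

end RTree

theorem coe_fprod (F G : Forest) :
    (fprod F G : Multiset RTree) =
      (F : Multiset RTree).bind fun t => (G : Multiset RTree).map t.tprod :=
  (Multiset.coe_bind ..).symm

theorem isGreatest_fdepth {F : Forest} (hF : F ≠ []) :
    IsGreatest {n | ∃ t ∈ F, t.depth = n} (fdepth F) := by
  have maximum_eq : (F.map RTree.depth).maximum = fdepth F :=
    (List.foldr_max_of_ne_nil (List.map_eq_nil_iff.not.2 hF)).symm
  refine ⟨List.mem_map.1 (List.maximum_mem maximum_eq), ?_⟩
  rintro n ⟨t, ht, rfl⟩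
  exact List.le_maximum_of_mem (List.mem_map_of_mem ht) maximum_eq

theorem isGreatest_fdepth_of_isFinite {F : Forest} (hF : ∀ t ∈ F, t.IsFinite) (hne : F ≠ []) :
    IsGreatest {n | ∃ t ∈ F, Nonempty (t.level n)} (fdepth F) := by
  obtain ⟨⟨t, ht, hd⟩, hub⟩ := isGreatest_fdepth hne
  refine ⟨⟨t, ht, hd ▸ (hF t ht).isGreatest_depth.1⟩, ?_⟩
  rintro n ⟨s, hs, hn⟩
  exact ((hF s hs).isGreatest_depth.2 hn).trans (hub ⟨s, hs, rfl⟩)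

/-- The number of homomorphisms from a test tree of depth at most `d` to a tree of the forest. -/
noncomputable def forestHomCount (d : ℕ) (F : Forest) (b : RTree.TestTree d) : ℕ :=
  (F.map fun t => t.homCount d b).sum

theorem ForestEq.forestHomCount_eq {F G : Forest} (h : ForestEq F G) (d : ℕ)
    (b : RTree.TestTree d) : forestHomCount d F b = forestHomCount d G b := by
  have : Multiset.Rel (· = ·) ((F : Multiset RTree).map (·.homCount d b))
      ((G : Multiset RTree).map (·.homCount d b)) :=
    Multiset.rel_map.2 (h.mono fun t _ s _ hts => by rw [hts.homCount_eq])
  exact congrArg Multiset.sum (Multiset.rel_eq.1 this)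

theorem forestHomCount_fprod (F G : Forest) (d : ℕ) (b : RTree.TestTree d) :
    forestHomCount d (fprod F G) b = forestHomCount d F b * forestHomCount d G b := by
  simp [forestHomCount, fprod, List.sum_flatten, Function.comp_def, RTree.homCount_tprod,
    List.sum_map_mul_left, List.sum_map_mul_right]

theorem forestHomCount_pos {F : Forest} {d : ℕ} (h : ∃ t ∈ F, Nonempty (t.level d))
    (b : RTree.TestTree d) : 0 < forestHomCount d F b := by
  obtain ⟨t, ht, hlevel⟩ := h
  exact (RTree.homCount_pos hlevel b).trans_le
    (List.single_le_sum (fun _ _ => Nat.zero_le _) _ (List.mem_map_of_mem ht))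

theorem forestEq_fcut_of_forestHomCount_eq {X Y : Forest} {d : ℕ}
    (h : ∀ b, forestHomCount d X b = forestHomCount d Y b) :
    ForestEq (fcut X d) (fcut Y d) := by
  have map_eq : (X : Multiset RTree).map (·.homCount d) =
      (Y : Multiset RTree).map (·.homCount d) := by
    refine multiset_eq_of_forall_sum_monoidHom_eq fun b => ?_
    rw [Multiset.map_map, Multiset.map_map]
    exact h b
  have rel := Multiset.rel_map.1 (Multiset.rel_eq.2 map_eq)
  exact Multiset.rel_map.2 (rel.mono fun _ _ _ _ hts => RTree.tcut_iso_of_homCount_eq hts)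

theorem ForestEq.fcut_of_fprod {A X Y : Forest} {d : ℕ} (hd : ∃ t ∈ A, Nonempty (t.level d))
    (h : ForestEq (fprod A X) (fprod A Y)) : ForestEq (fcut X d) (fcut Y d) := by
  refine forestEq_fcut_of_forestHomCount_eq fun b => ?_
  have mul_eq := h.forestHomCount_eq d b
  rw [forestHomCount_fprod, forestHomCount_fprod] at mul_eq
  exact Nat.eq_of_mul_eq_mul_left (forestHomCount_pos hd b) mul_eq

theorem ForestEq.fprod_of_fcut {A X Y : Forest} {d : ℕ}
    (hd : d ∈ upperBounds {n | ∃ t ∈ A, Nonempty (t.level n)})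
    (h : ForestEq (fcut X d) (fcut Y d)) : ForestEq (fprod A X) (fprod A Y) := by
  rw [ForestEq, coe_fprod, coe_fprod]
  refine multisetRel_bind_of_forall_mem fun t ht => ?_
  have htd : d ∈ upperBounds {n | Nonempty (t.level n)} := fun n hn => hd ⟨t, ht, hn⟩
  have rel_tcut : Multiset.Rel (fun x y : RTree => (x.tcut d).Iso (y.tcut d)) X Y :=
    Multiset.rel_map.1 h
  refine Multiset.rel_map.2 (rel_tcut.mono fun x _ y _ hxy => ?_)
  exact (RTree.iso_tprod_tcut htd x).trans
    (((RTree.Iso.refl t).tprod hxy).trans (RTree.iso_tprod_tcut htd y).symm)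

theorem stmt1_general (A X Y : Forest) (hA : ∀ t ∈ A, t.IsFinite) (hAne : A ≠ []) :
    ForestEq (fprod A X) (fprod A Y) ↔ ForestEq (fcut X (fdepth A)) (fcut Y (fdepth A)) :=
  have hd := isGreatest_fdepth_of_isFinite hA hAne
  ⟨ForestEq.fcut_of_fprod hd.1, ForestEq.fprod_of_fcut hd.2⟩

/-- Let `𝐀, 𝐗, 𝐘` be nonempty forests of finite rooted trees.
Then `𝐀·𝐗 = 𝐀·𝐘` if and only if `𝐗|_{depth 𝐀} = 𝐘|_{depth 𝐀}`. -/
theorem stmt1 (A X Y : Forest)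
    (hA : ∀ t ∈ A, t.IsFinite) (hX : ∀ t ∈ X, t.IsFinite) (hY : ∀ t ∈ Y, t.IsFinite)
    (hAne : A ≠ []) (hXne : X ≠ []) (hYne : Y ≠ []) :
    ForestEq (fprod A X) (fprod A Y) ↔ ForestEq (fcut X (fdepth A)) (fcut Y (fdepth A)) := by
  exact stmt1_general A X Y hA hAne
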